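/- Let 1 ≤ k ≤ n, g ≥ 1, k̃ = g(k−1)+1 ≤ n, and ν = k + min{k, n−k̃}. Then there exists a ν×n binary (0/1) matrix Λ such that: (i) every column of Λ has exactly k ones; (ii) there are k rows of Λ whose supports each contain an information set for RS_{k̃}(α) (a size-k̃ set of coordinates on which the projection of RS_{k̃}(α) is bijective); and (iii) the remaining ν−k rows of Λ each have support exactly {1,…,k}. In other words, a PPC systematic achievable rate matrix with parameters (κ,ν) = (k, k+min{k, n−k̃}) always exists. -/

import Mathlib

/-!
Write `m = g (k - 1) + 1` and `s = min k (n - m)`. The column and row conditions force the shape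
of `Λ`: the `s` rows outside `T` are the indicator of the systematic columns, so a row of `T` is
all ones on the non-systematic columns, and the `k × k` systematic block of `T` has exactly `s`
zeros in each column. Taking this block circulant, with a zero at `(i, j)` iff `(i + j) % k < s`,
also gives exactly `s` zeros in each row (`card_filter_add_mod_lt`). Hence each row of `T` has
`n - s ≥ m` ones, and any `m` coordinates are an information set of a Reed–Solomon code of
dimension `m` by Lagrange interpolation (`RSCode_bijective_restrict`).
-/

/-- The Reed–Solomon code `RS_k(α)`: evaluation vectors of polynomials of degree `< k`
at the points `α_1, …, α_n`. -/
noncomputable def RSCode (F : Type*) [Field F] {n : ℕ} (k : ℕ) (α : Fin n → F) :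
    Submodule F (Fin n → F) :=
  (Polynomial.degreeLT F k).map (Polynomial.aeval α).toLinearMap

/-- Among the `k` cyclic shifts of `j` modulo `k`, exactly `s` have residue below `s`. -/
lemma card_filter_add_mod_lt {k s : ℕ} (hs : s ≤ k) (j : ℕ) :
    (Finset.univ.filter (fun i : Fin k => ((i : ℕ) + j) % k < s)).card = s := by
  have hper : Function.Periodic (fun a => a % k < s) k := by
    intro a
    simp
  have h1 := Nat.filter_Ico_card_eq_of_periodic j k (fun a => a % k < s) hper
  have h2 : Nat.count (fun a => a % k < s) k = s := by
    rw [Nat.count_eq_card_filter_range]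
    have : (Finset.range k).filter (fun a => a % k < s) = Finset.range s := by
      ext a
      simp only [Finset.mem_filter, Finset.mem_range]
      constructor
      · rintro ⟨h, h'⟩
        rwa [Nat.mod_eq_of_lt h] at h'
      · intro h
        have hk : a < k := by omega
        exact ⟨hk, by rwa [Nat.mod_eq_of_lt hk]⟩
    rw [this, Finset.card_range]
  rw [h2] at h1
  refine Eq.trans ?_ h1
  refine Finset.card_bij (fun i _ => (i : ℕ) + j) ?_ ?_ ?_
  · intro i hi
    simp only [Finset.mem_filter, Finset.mem_univ, true_and, Finset.mem_Ico] at hi ⊢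
    exact ⟨by omega, hi⟩
  · intro a _ b _ h
    exact Fin.ext (by simpa using h)
  · intro b hb
    simp only [Finset.mem_filter, Finset.mem_Ico] at hb
    refine ⟨⟨b - j, by omega⟩, ?_, ?_⟩
    · simp only [Finset.mem_filter, Finset.mem_univ, true_and]
      rw [Nat.sub_add_cancel hb.1.1]
      exact hb.2
    · exact Nat.sub_add_cancel hb.1.1

/-- The MDS property of Reed–Solomon codes: every set of `m` coordinates is an information set
for the code of dimension `m`. -/
lemma RSCode_bijective_restrict {F : Type*} [Field F] {n m : ℕ} {α : Fin n → F}
    (hα : Function.Injective α) (S : Finset (Fin n)) (hS : S.card = m) :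
    Function.Bijective
      (fun c : RSCode F m α => fun j : {j : Fin n // j ∈ S} => (c : Fin n → F) j) := by
  have hev : ∀ (p : Polynomial F) (j : Fin n), (Polynomial.aeval α p) j = p.eval (α j) := by
    intro p j
    rw [← Polynomial.coe_aeval_eq_eval]
    exact (Polynomial.aeval_algHom_apply (Pi.evalAlgHom F (fun _ : Fin n => F) j) α p).symm
  constructor
  · rintro ⟨_, p, hp, rfl⟩ ⟨_, r, hr, rfl⟩ h
    have hp' := Polynomial.mem_degreeLT.1 hp
    have hr' := Polynomial.mem_degreeLT.1 hr
    have : p = r := by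
      refine Polynomial.eq_of_degrees_lt_of_eval_index_eq S hα.injOn (by rwa [hS]) (by rwa [hS]) ?_
      intro j hj
      have := congrFun h ⟨j, hj⟩
      simpa [hev] using this
    subst this
    rfl
  · intro f
    classical
    let r : Fin n → F := fun j => if h : j ∈ S then f ⟨j, h⟩ else 0
    refine ⟨⟨_, Lagrange.interpolate S α r, Polynomial.mem_degreeLT.2 ?_, rfl⟩, ?_⟩
    · rw [← hS]
      exact Lagrange.degree_interpolate_lt r hα.injOn
    · funext ⟨j, hj⟩
      change (Polynomial.aeval α (Lagrange.interpolate S α r)) j = _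
      rw [hev, Lagrange.eval_interpolate_at_node r hα.injOn hj]
      simp [r, hj]

/-- Row `i < k` has a zero exactly at the systematic columns `j` with `(i + j) % k < s`; each of
the last `s` rows is the indicator of the systematic columns. -/
def circulantRate (n k s : ℕ) : Matrix (Fin (k + s)) (Fin n) Bool := fun i j =>
  if (i : ℕ) < k then decide (¬((j : ℕ) < k ∧ ((i : ℕ) + j) % k < s)) else decide ((j : ℕ) < k)

lemma circulantRate_column (n k s : ℕ) (hs : s ≤ k) (j : Fin n) :
    (Finset.univ.filter (fun i => circulantRate n k s i j = true)).card = k := by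
  rw [Finset.card_filter, Fin.sum_univ_add]
  by_cases hj : (j : ℕ) < k
  · have h := card_filter_add_mod_lt hs (j : ℕ)
    have h' := Finset.card_filter_add_card_filter_not (s := (Finset.univ : Finset (Fin k)))
      (fun i : Fin k => ((i : ℕ) + j) % k < s)
    rw [h, Finset.card_univ, Fintype.card_fin, Finset.card_filter] at h'
    simp only [circulantRate, Fin.val_castAdd, Fin.val_natAdd, Fin.is_lt, if_true, hj, true_and,
      decide_eq_true_eq]
    simp
    simp at h'
    omega
  · simp [circulantRate, hj]

lemma circulantRate_row (n k s m : ℕ) (hs : s ≤ k) (hm : m + s ≤ n)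
    (i : Fin (k + s)) (hi : (i : ℕ) < k) :
    m ≤ (Finset.univ.filter (fun j => circulantRate n k s i j = true)).card := by
  have h' := Finset.card_filter_add_card_filter_not (s := (Finset.univ : Finset (Fin n)))
    (fun j => circulantRate n k s i j = true)
  rw [Finset.card_univ, Fintype.card_fin] at h'
  have h2 : (Finset.univ.filter (fun j => ¬ circulantRate n k s i j = true)).card ≤ s := by
    conv_rhs => rw [← card_filter_add_mod_lt hs (i : ℕ)]
    have hz : ∀ j : Fin n, ¬ circulantRate n k s i j = true →
        (j : ℕ) < k ∧ ((i : ℕ) + j) % k < s := by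
      intro j hj
      simp only [circulantRate, hi, if_true, decide_eq_true_eq, not_not] at hj
      exact hj
    refine Finset.card_le_card_of_injOn
      (fun j => (⟨(j : ℕ) % k, Nat.mod_lt _ (by omega)⟩ : Fin k)) ?_ ?_
    · intro j hj
      have hj' := hz j (by simpa using hj)
      simp only [Finset.coe_filter, Finset.mem_univ, true_and, Set.mem_ofPred_eq]
      rw [Nat.mod_eq_of_lt hj'.1, add_comm]
      exact hj'.2
    · intro a ha b hb h
      have ha' := hz a (by simpa using ha)
      have hb' := hz b (by simpa using hb)
      simp only [Fin.mk.injEq, Nat.mod_eq_of_lt ha'.1, Nat.mod_eq_of_lt hb'.1] at h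
      exact Fin.ext h
  omega

/-- A PPC systematic achievable rate matrix with parameters
`(κ,ν) = (k, k + min{k, n−k̃})` always exists, where `k̃ = g(k−1)+1 ≤ n`: there is a
`ν×n` binary matrix `Λ` such that (i) every column of `Λ` has exactly `k` ones; (ii) there
are `k` rows of `Λ` whose supports each contain an information set for `RS_{k̃}(α)` (a
size-`k̃` set of coordinates on which the projection of `RS_{k̃}(α)` is bijective); and
(iii) the remaining `ν−k` rows each have support exactly the systematic positions
`{1,…,k}`. -/
theorem ppc_sys_achievable_rate_matrix_exists (F : Type*) [Field F] [Fintype F]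
    (n k g : ℕ) (hn : n < Fintype.card F) (α : Fin n → F) (hα : Function.Injective α)
    (hα0 : ∀ j, α j ≠ 0) (hk1 : 1 ≤ k) (hkn : k ≤ n) (hg : 1 ≤ g)
    (hkt : g * (k - 1) + 1 ≤ n) :
    ∃ Λ : Matrix (Fin (k + min k (n - (g * (k - 1) + 1)))) (Fin n) Bool,
      (∀ j, (Finset.univ.filter (fun i => Λ i j = true)).card = k) ∧
      ∃ T : Finset (Fin (k + min k (n - (g * (k - 1) + 1)))),
        T.card = k ∧
        (∀ i ∈ T, ∃ S : Finset (Fin n),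
          S.card = g * (k - 1) + 1 ∧ (∀ j ∈ S, Λ i j = true) ∧
          Function.Bijective
            (fun c : RSCode F (g * (k - 1) + 1) α =>
              fun j : {j : Fin n // j ∈ S} => (c : Fin n → F) j)) ∧
        (∀ i ∉ T, ∀ j : Fin n, Λ i j = true ↔ (j : ℕ) < k) := by
  set m := g * (k - 1) + 1
  have hs : min k (n - m) ≤ k := min_le_left _ _
  have hm : m + min k (n - m) ≤ n := by omega
  refine ⟨circulantRate n k _, circulantRate_column n k _ hs,
    Finset.univ.filter (fun i => (i : ℕ) < k), ?_, ?_, ?_⟩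
  · rw [Finset.card_filter, Fin.sum_univ_add]
    simp
  · intro i hi
    obtain ⟨S, hSsub, hS⟩ := Finset.exists_subset_card_eq
      (circulantRate_row n k _ m hs hm i (by simpa using hi))
    exact ⟨S, hS, fun j hj => by simpa using hSsub hj, RSCode_bijective_restrict hα S hS⟩
  · intro i hi j
    simp only [Finset.mem_filter, Finset.mem_univ, true_and] at hi
    simp [circulantRate, hi]
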